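/- For every integer n > 2^15 = 32768, every positive integer N, and every n-linear form U : (ℂ^N)^n → ℂ, one has (∑_{i₁,…,iₙ=1}^N |U(e_{i₁},…,e_{iₙ})|^{2n/(n+1)})^{(n+1)/(2n)} ≤ 0.99136434217 · (n-1)^{0.304975} · ‖U‖. -/

import Mathlib

open Real

/-- The Bohnenblust--Hille quantity of an `n`-linear form on `ℓ_∞^N` over `ℂ`:
`(∑_{i₁,…,iₙ} |U(e_{i₁},…,e_{iₙ})|^{2n/(n+1)})^{(n+1)/(2n)}`. -/
noncomputable def BHcomplex (n N : ℕ)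
    (U : ContinuousMultilinearMap ℂ (fun _ : Fin n => (Fin N → ℂ)) ℂ) : ℝ :=
  (∑ i : Fin n → Fin N,
      ‖U (fun k => Pi.single (i k) (1 : ℂ))‖ ^ ((2 * n : ℝ) / (n + 1)))
    ^ ((n + 1 : ℝ) / (2 * n))

/-!
Blei's interpolation bounds the `ℓ^{2(m+1)/(m+2)}` norm of the coefficients of an `(m+1)`-linear
form `U` by the geometric mean, over the `m + 1` slots, of the mixed norms that are `ℓ^p` with
`p = 2m/(m+1)` in the other `m` slots and `ℓ^2` in the distinguished one. A Khinchin inequality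
with constant `exp (15/56 * (2/p - 1)) = exp (15/56 * 1/m)` replaces the `ℓ^2` norm by an average
over the values of `U` at points of the torus in the distinguished slot, which are `m`-linear forms
of norm at most `‖U‖`. By induction the constants multiply to `exp (15/56 * H_{n-1})` for
`n`-linear forms, at most a constant times `(n-1)^{15/56}`, and `15/56 < 0.304975`.

The Khinchin inequality is an entropy estimate: if `X ≥ 0` has mean `1` and `𝔼 X log X ≤ c`, then
`𝔼 X^{1-ε} ≥ exp (-c ε)`. For `X = |∑ aᵢ ωᵢ|²` with `∑ |aᵢ|² = 1`, bounding `log` by a cubic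
polynomial reduces the entropy to the moments `𝔼 X^k`, `k ≤ 4`. These are the same whether the `ωᵢ`
are uniform on the circle or on the fifth roots of unity, so all averages can be taken finite.
-/

open scoped NNReal BigOperators

section EllNorm

variable {ι κ : Type*} [Fintype ι] [Fintype κ] {p q r : ℝ}

/-- The `ℓ^p` (quasi-)norm of a finite family of nonnegative reals. -/
noncomputable def ellNorm (p : ℝ) (f : ι → ℝ≥0) : ℝ≥0 := (∑ i, f i ^ p) ^ (1 / p)

lemma ellNorm_rpow (hp : p ≠ 0) (f : ι → ℝ≥0) : ellNorm p f ^ p = ∑ i, f i ^ p := by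
  rw [ellNorm, ← NNReal.rpow_mul, one_div_mul_cancel hp, NNReal.rpow_one]

lemma coe_ellNorm_rpow (hp : p ≠ 0) (f : ι → ℝ≥0) :
    (ellNorm p f : ℝ) ^ p = ∑ i, (f i : ℝ) ^ p := by
  exact_mod_cast ellNorm_rpow hp f

lemma ellNorm_mono (hp : 0 ≤ p) : Monotone (ellNorm p : (ι → ℝ≥0) → ℝ≥0) :=
  fun _ _ hfg => NNReal.rpow_le_rpow
    (Finset.sum_le_sum fun i _ => NNReal.rpow_le_rpow (hfg i) hp) (one_div_nonneg.2 hp)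

lemma ellNorm_rpow_fun (hp : p ≠ 0) (hq : q ≠ 0) (f : ι → ℝ≥0) :
    ellNorm (q / p) (fun i => f i ^ p) = ellNorm q f ^ p := by
  simp only [ellNorm, ← NNReal.rpow_mul]
  congr 2
  · simp only [mul_div_cancel₀ _ hp]
  · field_simp

lemma ellNorm_sum_le (hp : 1 ≤ p) (f : κ → ι → ℝ≥0) :
    ellNorm p (∑ k, f k) ≤ ∑ k, ellNorm p (f k) := by
  have hp₀ : p ≠ 0 := (zero_lt_one.trans_le hp).ne'
  refine Finset.le_sum_of_subadditive (ellNorm p) ?_ (fun f g => ?_) _ _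
  · simp [ellNorm, hp₀]
  · exact NNReal.Lp_add_le _ f g hp

lemma ellNorm_ellNorm_le_ellNorm_ellNorm (hp : 0 < p) (hpq : p ≤ q) (f : ι → κ → ℝ≥0) :
    ellNorm q (fun i => ellNorm p (f i)) ≤ ellNorm p (fun k => ellNorm q fun i => f i k) := by
  have hq : 0 < q := hp.trans_le hpq
  have h := ellNorm_sum_le ((one_le_div hp).2 hpq) fun k i => f i k ^ p
  rw [← NNReal.rpow_le_rpow_iff hp, ellNorm_rpow hp.ne', ← ellNorm_rpow_fun hp.ne' hq.ne']
  simp only [ellNorm_rpow hp.ne', ← ellNorm_rpow_fun hp.ne' hq.ne']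
  convert h using 2
  ext i
  simp

lemma sum_prod_rpow_le_prod_sum_rpow (f : κ → ι → ℝ≥0) {w : κ → ℝ} (hw : ∀ k, 0 ≤ w k)
    (hw₁ : ∑ k, w k = 1) : ∑ i, ∏ k, f k i ^ w k ≤ ∏ k, (∑ i, f k i) ^ w k := by
  let _ : MeasurableSpace ι := ⊤
  have h := ENNReal.lintegral_prod_norm_pow_le (μ := MeasureTheory.Measure.count) Finset.univ
    (f := fun k i => (f k i : ENNReal)) (fun _ _ => measurable_from_top.aemeasurable) hw₁
    fun k _ => hw k
  simp only [MeasureTheory.lintegral_count, tsum_fintype] at h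
  rw [← ENNReal.coe_le_coe]
  simpa [ENNReal.ofNNReal_finsetProd, ENNReal.ofNNReal_finsetSum, ENNReal.coe_rpow_of_nonneg, hw]
    using h

lemma ellNorm_prod_rpow_le {e w : κ → ℝ} (he : ∀ k, 0 < e k) (hw : ∀ k, 0 ≤ w k) (hr : 0 < r)
    (hwe : ∑ k, w k / e k = 1 / r) (f : κ → ι → ℝ≥0) :
    ellNorm r (fun i => ∏ k, f k i ^ w k) ≤ ∏ k, ellNorm (e k) (f k) ^ w k := by
  have hw₁ : ∑ k, r * (w k / e k) = 1 := by
    rw [← Finset.mul_sum, hwe, mul_one_div_cancel hr.ne']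
  have h := sum_prod_rpow_le_prod_sum_rpow (fun k i => f k i ^ e k)
    (fun k => mul_nonneg hr.le (div_nonneg (hw k) (he k).le)) hw₁
  rw [← NNReal.rpow_le_rpow_iff hr, ellNorm_rpow hr.ne']
  simp only [← NNReal.finsetProd_rpow, ← NNReal.rpow_mul, ellNorm] at h ⊢
  have hexp (k : κ) : w k * r = e k * (r * (w k / e k)) := by
    rw [mul_left_comm, mul_div_cancel₀ _ (he k).ne', mul_comm]
  have hexp' (k : κ) : 1 / e k * w k * r = r * (w k / e k) := by ring
  simpa only [hexp, ← hexp'] using h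

lemma ellNorm_fin_cons (hp : p ≠ 0) {n : ℕ} (f : (Fin (n + 1) → ι) → ℝ≥0) :
    ellNorm p (fun i => ellNorm p fun v => f (Fin.cons i v)) = ellNorm p f := by
  rw [ellNorm, ellNorm, ← (Fin.consEquiv fun _ => ι).sum_comp, Fintype.sum_prod_type]
  simp only [ellNorm_rpow hp]
  rfl

end EllNorm

section MixedNorm

variable {ι κ : Type*} [Fintype ι] [Fintype κ] {p s r : ℝ}

/-- The mixed norm `ℓ^{e 0}(ℓ^{e 1}(⋯))` of an array of nonnegative reals indexed by `n`-tuples,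
the first coordinate carrying the outermost norm. -/
noncomputable def mixedNorm : (n : ℕ) → (Fin n → ℝ) → ((Fin n → ι) → ℝ≥0) → ℝ≥0
  | 0, _, a => a Fin.elim0
  | n + 1, e, a => ellNorm (e 0) fun i => mixedNorm n (Fin.tail e) fun v => a (Fin.cons i v)

lemma mixedNorm_const (hp : p ≠ 0) (n : ℕ) (a : (Fin n → ι) → ℝ≥0) :
    mixedNorm n (fun _ => p) a = ellNorm p a := by
  induction n with
  | zero =>
    rw [mixedNorm, ellNorm, Fintype.sum_unique, ← NNReal.rpow_mul, mul_one_div_cancel hp,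
      NNReal.rpow_one]
    congr
  | succ n ih =>
    rw [mixedNorm, ← ellNorm_fin_cons hp]
    exact congrArg (ellNorm p) (funext fun i => ih _)

lemma mixedNorm_le_prod_mixedNorm_rpow {w : κ → ℝ} (hw : ∀ k, 0 ≤ w k) (hw₁ : ∑ k, w k = 1)
    {n : ℕ} {e : κ → Fin n → ℝ} (he : ∀ k j, 0 < e k j) {r : Fin n → ℝ} (hr : ∀ j, 0 < r j)
    (hwe : ∀ j, ∑ k, w k / e k j = 1 / r j) (a : (Fin n → ι) → ℝ≥0) :
    mixedNorm n r a ≤ ∏ k, mixedNorm n (e k) a ^ w k := by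
  induction n with
  | zero =>
    simp only [mixedNorm]
    rw [← NNReal.coe_le_coe]
    push_cast
    rw [← Real.rpow_sum_of_nonneg (NNReal.coe_nonneg _) fun k _ => hw k, hw₁, Real.rpow_one]
  | succ n ih =>
    calc mixedNorm (n + 1) r a
        ≤ ellNorm (r 0) fun i => ∏ k,
            mixedNorm n (Fin.tail (e k)) (fun v => a (Fin.cons i v)) ^ w k :=
          ellNorm_mono (hr 0).le fun i =>
            ih (fun k j => he k j.succ) (fun j => hr j.succ) (fun j => hwe j.succ) _
      _ ≤ ∏ k, mixedNorm (n + 1) (e k) a ^ w k :=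
          ellNorm_prod_rpow_le (fun k => he k 0) hw (hr 0) (hwe 0) _

lemma mixedNorm_update_zero_le (hp : 0 < p) (hps : p ≤ s) {n : ℕ}
    (a : (Fin (n + 1) → ι) → ℝ≥0) :
    mixedNorm (n + 1) (Function.update (fun _ => p) 0 s) a ≤
      ellNorm p fun v => ellNorm s fun i => a (Fin.cons i v) := by
  rw [mixedNorm, Fin.tail_update_zero, Function.update_self]
  simp only [Fin.tail_def, mixedNorm_const hp.ne']
  exact ellNorm_ellNorm_le_ellNorm_ellNorm hp hps _

lemma mixedNorm_update_le (hp : 0 < p) (hps : p ≤ s) {n : ℕ} (k : Fin (n + 1))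
    (a : (Fin (n + 1) → ι) → ℝ≥0) :
    mixedNorm (n + 1) (Function.update (fun _ => p) k s) a ≤
      ellNorm p fun v => ellNorm s fun i => a (k.insertNth i v) := by
  induction n with
  | zero =>
    simpa only [Fin.fin_one_eq_zero k, Fin.insertNth_zero'] using mixedNorm_update_zero_le hp hps a
  | succ n ih =>
    cases k using Fin.cases with
    | zero => simpa only [Fin.insertNth_zero'] using mixedNorm_update_zero_le hp hps a
    | succ k =>
      rw [mixedNorm, Fin.tail_update_succ, Function.update_of_ne (Fin.succ_ne_zero k).symm,
        ← ellNorm_fin_cons hp.ne']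
      simp only [Fin.insertNth_succ_cons]
      exact ellNorm_mono hp.le fun i => ih k fun v => a (Fin.cons i v)

/-- Blei's inequality: Hölder interpolates between the mixed norms with exponent `s` in slot `k` and
`p` elsewhere, and Minkowski moves the `ℓ^s` norm inside. -/
lemma ellNorm_le_prod_ellNorm_insertNth (hp : 0 < p) (hps : p ≤ s) (hr : 0 < r) {n : ℕ}
    (hpsr : 1 / r = (1 / s + n / p) / (n + 1)) (a : (Fin (n + 1) → ι) → ℝ≥0) :
    ellNorm r a ≤
      ∏ k : Fin (n + 1), (ellNorm p fun v => ellNorm s fun i => a (k.insertNth i v)) ^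
        (1 / (n + 1) : ℝ) := by
  have hs : 0 < s := hp.trans_le hps
  rw [← mixedNorm_const hr.ne']
  refine (mixedNorm_le_prod_mixedNorm_rpow (w := fun _ : Fin (n + 1) => 1 / (n + 1 : ℝ))
    (e := fun k => Function.update (fun _ => p) k s) (fun _ => by positivity) ?_
    (fun k j => ?_) (fun _ => hr) (fun j => ?_) a).trans ?_
  · rw [Fin.sum_const, nsmul_eq_mul, Nat.cast_add_one, mul_one_div_cancel (by positivity)]
  · rcases eq_or_ne j k with rfl | hjk
    · simpa using hs
    · simpa [hjk] using hp
  · rw [Fin.sum_univ_succAbove _ j, hpsr]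
    simp only [one_div, Function.update, ↓reduceDIte, (Fin.succAbove_ne j _).symm,
      Finset.sum_const, Finset.card_univ, Fintype.card_fin, nsmul_eq_mul]
    field_simp
  · exact Finset.prod_le_prod' fun k _ =>
      NNReal.rpow_le_rpow (mixedNorm_update_le hp hps k a) (by positivity)

lemma ellNorm_le_of_forall_ellNorm_insertNth_le (hp : 0 < p) (hps : p ≤ s) (hr : 0 < r) {n : ℕ}
    (hpsr : 1 / r = (1 / s + n / p) / (n + 1)) {a : (Fin (n + 1) → ι) → ℝ≥0} {M : ℝ≥0}
    (ha : ∀ k : Fin (n + 1), (ellNorm p fun v => ellNorm s fun i => a (k.insertNth i v)) ≤ M) :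
    ellNorm r a ≤ M :=
  calc ellNorm r a
      ≤ ∏ k : Fin (n + 1), (ellNorm p fun v => ellNorm s fun i => a (k.insertNth i v)) ^
          (1 / (n + 1) : ℝ) := ellNorm_le_prod_ellNorm_insertNth hp hps hr hpsr a
    _ ≤ ∏ _k : Fin (n + 1), M ^ (1 / (n + 1) : ℝ) :=
        Finset.prod_le_prod' fun k _ => NNReal.rpow_le_rpow (ha k) (by positivity)
    _ = M := by
        rw [Fin.prod_const, ← NNReal.rpow_mul_natCast, Nat.cast_add_one,
          one_div_mul_cancel (by positivity), NNReal.rpow_one]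

end MixedNorm

section Character

open scoped ComplexConjugate

variable {G : Type*} [AddCommGroup G] [Fintype G] {ψ : AddChar G ℂ}

lemma expect_pow_mul_conj_pow {j l : ℕ} (hj : j < orderOf ψ) (hl : l < orderOf ψ) :
    𝔼 g, ψ g ^ j * conj (ψ g ^ l) = if j = l then 1 else 0 := by
  have h (g : G) : ψ g ^ j * conj (ψ g ^ l) = (ψ ^ j * (ψ ^ l)⁻¹) g := by
    rw [AddChar.mul_apply, AddChar.inv_apply, AddChar.map_neg_eq_conj, AddChar.pow_apply,
      AddChar.pow_apply]
  simp only [h, AddChar.expect_eq_ite]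
  exact if_congr (mul_inv_eq_one.trans (pow_injOn_Iio_orderOf.eq_iff hj hl)) rfl rfl

lemma expect_norm_sum_mul_pow_sq {m : ℕ} (hm : m ≤ orderOf ψ) (c : ℕ → ℂ) :
    𝔼 g, ‖∑ j ∈ Finset.range m, c j * ψ g ^ j‖ ^ 2 = ∑ j ∈ Finset.range m, ‖c j‖ ^ 2 := by
  have horth {j l : ℕ} (hj : j ∈ Finset.range m) (hl : l ∈ Finset.range m) :
      𝔼 g, ψ g ^ j * conj (ψ g ^ l) = if j = l then 1 else 0 :=
    expect_pow_mul_conj_pow ((Finset.mem_range.1 hj).trans_le hm)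
      ((Finset.mem_range.1 hl).trans_le hm)
  rw [← Complex.ofReal_inj, Complex.ofReal_expect]
  push_cast
  calc 𝔼 g, (‖∑ j ∈ Finset.range m, c j * ψ g ^ j‖ : ℂ) ^ 2
      = ∑ j ∈ Finset.range m, ∑ l ∈ Finset.range m,
          c j * conj (c l) * 𝔼 g, ψ g ^ j * conj (ψ g ^ l) := by
        simp only [← Complex.mul_conj', map_sum, map_mul (starRingEnd ℂ) (c _), Finset.sum_mul_sum,
          Finset.expect_sum_comm, Finset.mul_expect, mul_mul_mul_comm]
    _ = ∑ j ∈ Finset.range m, ∑ l ∈ Finset.range m,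
          c j * conj (c l) * if j = l then 1 else 0 :=
        Finset.sum_congr rfl fun j hj => Finset.sum_congr rfl fun l hl => by rw [horth hj hl]
    _ = ∑ j ∈ Finset.range m, (‖c j‖ : ℂ) ^ 2 :=
        Finset.sum_congr rfl fun j hj => by simp [Complex.mul_conj', Finset.mem_range.1 hj]

lemma expect_norm_add_mul_pow {k : ℕ} (hk : k < orderOf ψ) (w a : ℂ) :
    𝔼 g, (‖w + a * ψ g‖ ^ 2) ^ k =
      ∑ j ∈ Finset.range (k + 1), (k.choose j : ℝ) ^ 2 * (‖w‖ ^ 2) ^ (k - j) * (‖a‖ ^ 2) ^ j := by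
  have h (z : ℂ) : (‖w + a * z‖ ^ 2) ^ k =
      ‖∑ j ∈ Finset.range (k + 1), a ^ j * w ^ (k - j) * k.choose j * z ^ j‖ ^ 2 := by
    rw [pow_right_comm, ← norm_pow, add_comm, add_pow]
    simp only [mul_pow, mul_right_comm]
  simp only [h, expect_norm_sum_mul_pow_sq hk, norm_mul, norm_pow, Complex.norm_natCast, mul_pow]
  exact Finset.sum_congr rfl fun j _ => by ring

variable {ι : Type*} [Fintype ι] [DecidableEq ι] {i : ι} {s : Finset ι}

lemma expect_sum_insert (hi : i ∉ s) (a : ι → ℂ) (F : ℂ → ℝ) :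
    𝔼 x : ι → G, F (∑ j ∈ insert i s, a j * ψ (x j)) =
      𝔼 x : ι → G, 𝔼 g, F (∑ j ∈ s, a j * ψ (x j) + a i * ψ g) := by
  have hshift (g : G) : 𝔼 x : ι → G, F (∑ j ∈ s, a j * ψ (x j) + a i * ψ (x i + g)) =
      𝔼 x : ι → G, F (∑ j ∈ insert i s, a j * ψ (x j)) := by
    refine Fintype.expect_equiv (Equiv.addRight (Pi.single i g)) _ _ fun x => ?_
    rw [Finset.sum_insert hi, add_comm]
    congr 2
    · simp
    · refine Finset.sum_congr rfl fun j hj => ?_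
      simp [ne_of_mem_of_not_mem hj hi]
  calc 𝔼 x : ι → G, F (∑ j ∈ insert i s, a j * ψ (x j))
      = 𝔼 g, 𝔼 x : ι → G, F (∑ j ∈ s, a j * ψ (x j) + a i * ψ (x i + g)) := by
        simp only [hshift, Fintype.expect_const]
    _ = 𝔼 x : ι → G, 𝔼 g, F (∑ j ∈ s, a j * ψ (x j) + a i * ψ (x i + g)) := Finset.expect_comm ..
    _ = 𝔼 x : ι → G, 𝔼 g, F (∑ j ∈ s, a j * ψ (x j) + a i * ψ g) :=
        Finset.expect_congr rfl fun x _ =>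
          Fintype.expect_equiv (Equiv.addLeft (x i)) _ _ fun _ => rfl

lemma expect_norm_sum_insert_pow {k : ℕ} (hk : k < orderOf ψ) (hi : i ∉ s) (a : ι → ℂ) :
    𝔼 x : ι → G, (‖∑ j ∈ insert i s, a j * ψ (x j)‖ ^ 2) ^ k =
      ∑ j ∈ Finset.range (k + 1), (k.choose j : ℝ) ^ 2 *
        (𝔼 x : ι → G, (‖∑ j ∈ s, a j * ψ (x j)‖ ^ 2) ^ (k - j)) * (‖a i‖ ^ 2) ^ j := by
  rw [expect_sum_insert hi a fun z => (‖z‖ ^ 2) ^ k]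
  simp only [expect_norm_add_mul_pow hk, Finset.expect_sum_comm, Finset.mul_expect,
    Finset.expect_mul]

lemma expect_norm_sum_sq (hψ : 1 < orderOf ψ) (a : ι → ℂ) (s : Finset ι) :
    𝔼 x : ι → G, ‖∑ j ∈ s, a j * ψ (x j)‖ ^ 2 = ∑ j ∈ s, ‖a j‖ ^ 2 := by
  induction s using Finset.induction_on with
  | empty => simp
  | insert i s hi ih =>
    have h := expect_norm_sum_insert_pow hψ hi a
    simp only [pow_one] at h
    rw [h]
    simp [Finset.sum_range_succ, hi, ih, add_comm]

lemma expect_norm_sum_sq_pow_two (hψ : 2 < orderOf ψ) (a : ι → ℂ) (s : Finset ι) :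
    𝔼 x : ι → G, (‖∑ j ∈ s, a j * ψ (x j)‖ ^ 2) ^ 2 =
      2 * (∑ j ∈ s, ‖a j‖ ^ 2) ^ 2 - ∑ j ∈ s, (‖a j‖ ^ 2) ^ 2 := by
  induction s using Finset.induction_on with
  | empty => simp
  | insert i s hi ih =>
    rw [expect_norm_sum_insert_pow hψ hi]
    simp only [Finset.sum_range_succ, Finset.sum_range_zero, Nat.choose, Nat.reduceAdd,
      Nat.reduceSub, Nat.cast_ofNat, pow_zero, pow_one, ih,
      expect_norm_sum_sq (one_lt_two.trans hψ), Fintype.expect_const, Finset.sum_insert hi]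
    ring

lemma expect_norm_sum_sq_pow_three (hψ : 3 < orderOf ψ) (a : ι → ℂ) (s : Finset ι) :
    𝔼 x : ι → G, (‖∑ j ∈ s, a j * ψ (x j)‖ ^ 2) ^ 3 =
      6 * (∑ j ∈ s, ‖a j‖ ^ 2) ^ 3
        - 9 * (∑ j ∈ s, ‖a j‖ ^ 2) * ∑ j ∈ s, (‖a j‖ ^ 2) ^ 2
        + 4 * ∑ j ∈ s, (‖a j‖ ^ 2) ^ 3 := by
  induction s using Finset.induction_on with
  | empty => simp
  | insert i s hi ih =>
    rw [expect_norm_sum_insert_pow hψ hi]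
    simp only [Finset.sum_range_succ, Finset.sum_range_zero, Nat.choose, Nat.reduceAdd,
      Nat.reduceSub, Nat.cast_ofNat, pow_zero, pow_one, ih,
      expect_norm_sum_sq_pow_two (by lia : 2 < orderOf ψ),
      expect_norm_sum_sq (by lia : 1 < orderOf ψ), Fintype.expect_const, Finset.sum_insert hi]
    ring

lemma expect_norm_sum_sq_pow_four (hψ : 4 < orderOf ψ) (a : ι → ℂ) (s : Finset ι) :
    𝔼 x : ι → G, (‖∑ j ∈ s, a j * ψ (x j)‖ ^ 2) ^ 4 =
      24 * (∑ j ∈ s, ‖a j‖ ^ 2) ^ 4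
        - 72 * (∑ j ∈ s, ‖a j‖ ^ 2) ^ 2 * ∑ j ∈ s, (‖a j‖ ^ 2) ^ 2
        + 18 * (∑ j ∈ s, (‖a j‖ ^ 2) ^ 2) ^ 2
        + 64 * (∑ j ∈ s, ‖a j‖ ^ 2) * ∑ j ∈ s, (‖a j‖ ^ 2) ^ 3
        - 33 * ∑ j ∈ s, (‖a j‖ ^ 2) ^ 4 := by
  induction s using Finset.induction_on with
  | empty => simp
  | insert i s hi ih =>
    rw [expect_norm_sum_insert_pow hψ hi]
    simp only [Finset.sum_range_succ, Finset.sum_range_zero, Nat.choose, Nat.reduceAdd,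
      Nat.reduceSub, Nat.cast_ofNat, pow_zero, pow_one, ih,
      expect_norm_sum_sq_pow_three (by lia : 3 < orderOf ψ),
      expect_norm_sum_sq_pow_two (by lia : 2 < orderOf ψ),
      expect_norm_sum_sq (by lia : 1 < orderOf ψ), Fintype.expect_const, Finset.sum_insert hi]
    ring

end Character

section Entropy

lemma le_of_hasDerivAt_of_sub_mul_nonneg {f f' : ℝ → ℝ} {c x : ℝ}
    (hf : ∀ y ∈ Set.uIcc c x, HasDerivAt f (f' y) y)
    (hf' : ∀ y ∈ Set.uIcc c x, 0 ≤ (y - c) * f' y) : f c ≤ f x := by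
  have hcont : ContinuousOn f (Set.uIcc c x) := fun y hy =>
    (hf y hy).continuousAt.continuousWithinAt
  rcases le_total c x with h | h
  · rw [Set.uIcc_of_le h] at hf hf' hcont
    refine monotoneOn_of_hasDerivWithinAt_nonneg (convex_Icc c x) hcont
      (fun y hy => (hf y (interior_subset hy)).hasDerivWithinAt) (fun y hy => ?_)
      (Set.left_mem_Icc.2 h) (Set.right_mem_Icc.2 h) h
    rw [interior_Icc] at hy
    exact nonneg_of_mul_nonneg_right (hf' y (Set.Ioo_subset_Icc_self hy)) (sub_pos.2 hy.1)
  · rw [Set.uIcc_of_ge h] at hf hf' hcont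
    refine antitoneOn_of_hasDerivWithinAt_nonpos (convex_Icc x c) hcont
      (fun y hy => (hf y (interior_subset hy)).hasDerivWithinAt) (fun y hy => ?_)
      (Set.left_mem_Icc.2 h) (Set.right_mem_Icc.2 h) h
    rw [interior_Icc] at hy
    exact nonpos_of_mul_nonneg_right (hf' y (Set.Ioo_subset_Icc_self hy)) (sub_neg.2 hy.2)

lemma hasDerivAt_cubic_sub_log {x : ℝ} (hx : 0 < x) :
    HasDerivAt (fun y => (y ^ 3 - 11 * y ^ 2 + 47 * y - 37) / 28 - log y)
      ((x - 1) * (3 * x - 7) * (x - 4) / (28 * x)) x := by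
  have h := (((((hasDerivAt_id x).pow 3).sub (((hasDerivAt_id x).pow 2).const_mul 11)).add
    ((hasDerivAt_id x).const_mul 47)).sub_const 37 |>.div_const 28).sub (hasDerivAt_log hx.ne')
  refine h.congr_deriv ?_
  simp only [Nat.cast_ofNat, id_eq, Nat.add_one_sub_one, mul_one, pow_one]
  field_simp
  ring

/-- The cubic touches `log` at `1`; the gap has its other local minimum at `4`, where it equals
`39 / 28 - log 4 > 0`. -/
lemma log_le_cubic {x : ℝ} (hx : 0 < x) :
    log x ≤ (x ^ 3 - 11 * x ^ 2 + 47 * x - 37) / 28 := by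
  let f (y : ℝ) : ℝ := (y ^ 3 - 11 * y ^ 2 + 47 * y - 37) / 28 - log y
  suffices 0 ≤ f x from sub_nonneg.1 this
  have hpos {c y : ℝ} (hc : 0 < c) (hy : y ∈ Set.uIcc c x) : 0 < y := (lt_min hc hx).trans_le hy.1
  rcases le_total x (7 / 3) with hx' | hx'
  · refine (by norm_num [f] : (0 : ℝ) ≤ f 1).trans (le_of_hasDerivAt_of_sub_mul_nonneg
      (fun y hy => hasDerivAt_cubic_sub_log (hpos one_pos hy)) fun y hy => ?_)
    have hy₀ := hpos one_pos hy
    have hy₁ : y ≤ 7 / 3 := hy.2.trans (max_le (by norm_num) hx')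
    have hf' : (y - 1) * ((y - 1) * (3 * y - 7) * (y - 4) / (28 * y)) =
        (y - 1) ^ 2 * (7 - 3 * y) * (4 - y) / (28 * y) := by ring
    rw [hf']
    have : 0 ≤ 7 - 3 * y := by linarith
    have : 0 ≤ 4 - y := by linarith
    positivity
  · have hlog : log 4 = 2 * log 2 := by
      rw [show (4 : ℝ) = 2 ^ 2 by norm_num, log_pow, Nat.cast_ofNat]
    have hf₄ : 0 ≤ f 4 := by
      simp only [f, hlog]
      linarith [log_two_lt_d9]
    refine hf₄.trans (le_of_hasDerivAt_of_sub_mul_nonneg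
      (fun y hy => hasDerivAt_cubic_sub_log (hpos four_pos hy)) fun y hy => ?_)
    have hy₁ : 7 / 3 ≤ y := (le_min (by norm_num) hx').trans hy.1
    have hf' : (y - 4) * ((y - 1) * (3 * y - 7) * (y - 4) / (28 * y)) =
        (y - 4) ^ 2 * (3 * y - 7) * (y - 1) / (28 * y) := by ring
    rw [hf']
    have : 0 ≤ 3 * y - 7 := by linarith
    have : 0 ≤ y - 1 := by linarith
    positivity

lemma mul_log_le_quartic {x : ℝ} (hx : 0 ≤ x) :
    x * log x ≤ (x ^ 4 - 11 * x ^ 3 + 47 * x ^ 2 - 37 * x) / 28 := by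
  rcases hx.eq_or_lt with rfl | hx
  · simp
  · exact (mul_le_mul_of_nonneg_left (log_le_cubic hx) hx.le).trans_eq (by ring)

lemma exp_mul_le_rpow_one_sub {x : ℝ} (hx : 0 ≤ x) (c ε : ℝ) :
    exp (-(c * ε)) * (x + ε * (c * x - x * log x)) ≤ x ^ (1 - ε) := by
  rcases hx.eq_or_lt with rfl | hx
  · simpa using rpow_nonneg le_rfl _
  calc exp (-(c * ε)) * (x + ε * (c * x - x * log x))
      = x * (exp (-(c * ε)) * (ε * (c - log x) + 1)) := by ring
    _ ≤ x * (exp (-(c * ε)) * exp (ε * (c - log x))) := by gcongr; exact add_one_le_exp _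
    _ = x ^ (1 - ε) := by
      rw [← exp_add, rpow_sub hx, rpow_one, rpow_def_of_pos hx, div_eq_mul_inv, ← exp_neg]
      ring_nf

lemma exp_le_expect_rpow_one_sub {Ω : Type*} [Fintype Ω] {X : Ω → ℝ} {c ε : ℝ} (hX : 0 ≤ X)
    (hX₁ : 𝔼 ω, X ω = 1) (hc : 𝔼 ω, X ω * log (X ω) ≤ c) (hε : 0 ≤ ε) :
    exp (-(c * ε)) ≤ 𝔼 ω, X ω ^ (1 - ε) := by
  calc exp (-(c * ε))
      ≤ exp (-(c * ε)) * (1 + ε * (c * 1 - 𝔼 ω, X ω * log (X ω))) := by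
        refine le_mul_of_one_le_right (exp_nonneg _) (le_add_of_nonneg_right (mul_nonneg hε ?_))
        linarith
    _ = 𝔼 ω, exp (-(c * ε)) * (X ω + ε * (c * X ω - X ω * log (X ω))) := by
        simp only [← hX₁, Finset.mul_expect, ← Finset.expect_sub_distrib,
          ← Finset.expect_add_distrib]
    _ ≤ 𝔼 ω, X ω ^ (1 - ε) :=
        Finset.expect_le_expect fun ω _ => exp_mul_le_rpow_one_sub (hX ω) c ε

end Entropy

section Khinchin

variable {G ι : Type*} [AddCommGroup G] [Fintype G] [Fintype ι] [DecidableEq ι] {ψ : AddChar G ℂ}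

lemma expect_norm_sum_sq_mul_log_le (hψ : 4 < orderOf ψ) {a : ι → ℂ} (ha : ∑ i, ‖a i‖ ^ 2 = 1) :
    𝔼 x : ι → G, ‖∑ i, a i * ψ (x i)‖ ^ 2 * log (‖∑ i, a i * ψ (x i)‖ ^ 2) ≤ 15 / 28 := by
  let X (x : ι → G) : ℝ := ‖∑ i, a i * ψ (x i)‖ ^ 2
  let s := ∑ i, (‖a i‖ ^ 2) ^ 2
  let t := ∑ i, (‖a i‖ ^ 2) ^ 3
  let u := ∑ i, (‖a i‖ ^ 2) ^ 4
  have hst : s ^ 2 ≤ t := by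
    have h := Finset.sum_sq_le_sum_mul_sum_of_sq_le_mul Finset.univ (r := fun i => (‖a i‖ ^ 2) ^ 2)
      (f := fun i => ‖a i‖ ^ 2) (g := fun i => (‖a i‖ ^ 2) ^ 3) (fun _ _ => by positivity)
      (fun _ _ => by positivity) (fun _ _ => by ring_nf; rfl)
    rwa [ha, one_mul] at h
  have hstu : -20 * s + 38 * t - 33 * u ≤ 0 := by
    simp only [s, t, u, Finset.mul_sum, ← Finset.sum_add_distrib, ← Finset.sum_sub_distrib]
    refine Finset.sum_nonpos fun i _ => ?_
    have hdisc : -20 + 38 * ‖a i‖ ^ 2 - 33 * (‖a i‖ ^ 2) ^ 2 ≤ 0 := by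
      nlinarith [sq_nonneg (33 * ‖a i‖ ^ 2 - 19)]
    exact (mul_nonpos_of_nonneg_of_nonpos (sq_nonneg (‖a i‖ ^ 2)) hdisc).trans_eq' (by ring)
  calc 𝔼 x, X x * log (X x)
      ≤ 𝔼 x, (X x ^ 4 - 11 * X x ^ 3 + 47 * X x ^ 2 - 37 * X x) / 28 :=
        Finset.expect_le_expect fun x _ => mul_log_le_quartic (sq_nonneg _)
    _ = (15 - 20 * s + 18 * s ^ 2 + 20 * t - 33 * u) / 28 := by
        simp only [Finset.expect_sub_distrib, Finset.expect_add_distrib, ← Finset.mul_expect,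
          ← Finset.expect_div, X]
        rw [expect_norm_sum_sq_pow_four hψ, expect_norm_sum_sq_pow_three (by lia),
          expect_norm_sum_sq_pow_two (by lia), expect_norm_sum_sq (by lia), ha]
        ring
    _ ≤ 15 / 28 := by linarith

lemma exp_le_expect_norm_sum_rpow (hψ : 4 < orderOf ψ) {p : ℝ} (hp : p ≤ 2) {a : ι → ℂ}
    (ha : ∑ i, ‖a i‖ ^ 2 = 1) :
    exp (-(15 / 56 * (2 - p))) ≤ 𝔼 x : ι → G, ‖∑ i, a i * ψ (x i)‖ ^ p := by
  have h := exp_le_expect_rpow_one_sub (X := fun x : ι → G => ‖∑ i, a i * ψ (x i)‖ ^ 2)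
    (fun _ => sq_nonneg _) ((expect_norm_sum_sq (by lia) a _).trans ha)
    (expect_norm_sum_sq_mul_log_le hψ ha) (by linarith : 0 ≤ 1 - p / 2)
  simp only [← rpow_natCast_mul (norm_nonneg _)] at h
  convert h using 1
  · ring_nf
  · congr! 3
    simp only [Nat.cast_ofNat]
    ring

lemma sum_norm_sq_rpow_le_exp_mul_expect (hψ : 4 < orderOf ψ) {p : ℝ} (hp₀ : 0 < p) (hp : p ≤ 2)
    (a : ι → ℂ) : (∑ i, ‖a i‖ ^ 2) ^ (p / 2) ≤
      exp (15 / 56 * (2 - p)) * 𝔼 x : ι → G, ‖∑ i, a i * ψ (x i)‖ ^ p := by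
  rcases eq_or_ne (∑ i, ‖a i‖ ^ 2) 0 with h₀ | h₀
  · rw [h₀, zero_rpow (by positivity)]
    exact mul_nonneg (exp_nonneg _) (Finset.expect_nonneg fun _ _ => by positivity)
  set σ := ∑ i, ‖a i‖ ^ 2
  have hσ₀ : 0 ≤ σ := by positivity
  have ha : ∑ i, ‖(√σ : ℂ)⁻¹ * a i‖ ^ 2 = 1 := by
    simp only [norm_mul, norm_inv, Complex.norm_real, norm_of_nonneg (sqrt_nonneg _), mul_pow,
      inv_pow, sq_sqrt hσ₀, ← Finset.mul_sum]
    exact inv_mul_cancel₀ h₀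
  have h := exp_le_expect_norm_sum_rpow hψ hp ha
  simp only [mul_assoc, ← Finset.mul_sum, norm_mul, norm_inv, Complex.norm_real,
    norm_of_nonneg (sqrt_nonneg _), mul_rpow (inv_nonneg.2 (sqrt_nonneg σ)) (norm_nonneg _),
    ← Finset.mul_expect] at h
  have hσp : (√σ)⁻¹ ^ p = (σ ^ (p / 2))⁻¹ := by
    rw [inv_rpow (sqrt_nonneg σ), sqrt_eq_rpow, ← rpow_mul hσ₀, one_div_mul_eq_div]
  rwa [hσp, exp_neg, le_inv_mul_iff₀ (rpow_pos_of_pos (hσ₀.lt_of_ne' h₀) _),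
    mul_inv_le_iff₀ (exp_pos _), mul_comm] at h

end Khinchin

section BohnenblustHille

lemma orderOf_stdAddChar (q : ℕ) [NeZero q] :
    orderOf (ZMod.stdAddChar : AddChar (ZMod q) ℂ) = q := by
  refine Nat.dvd_right_iff_eq.1 fun k => ?_
  rw [orderOf_dvd_iff_pow_eq_one, ← ZMod.natCast_eq_zero_iff]
  constructor <;> intro h
  · refine ZMod.injective_stdAddChar ?_
    rw [AddChar.map_zero_eq_one, ← nsmul_one, AddChar.map_nsmul_eq_pow]
    exact DFunLike.congr_fun h 1
  · ext x
    rw [AddChar.pow_apply, ← AddChar.map_nsmul_eq_pow, nsmul_eq_mul, h, zero_mul,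
      AddChar.map_zero_eq_one, AddChar.one_apply]

variable {ι κ : Type*} [Fintype ι] [Fintype κ] {p : ℝ}

lemma ellNorm_ellNorm_two_le (hp₀ : 0 < p) (hp : p ≤ 2) {a : κ → ι → ℂ} {M : ℝ}
    (hM : ∀ x : ι → ℂ, ‖x‖ ≤ 1 → (ellNorm p fun v => ‖∑ i, a v i * x i‖₊) ≤ M) :
    (ellNorm p fun v => ellNorm 2 fun i => ‖a v i‖₊) ≤ exp (15 / 56 * (2 / p - 1)) * M := by
  classical
  let ψ : AddChar (ZMod 5) ℂ := ZMod.stdAddChar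
  have hψ : 4 < orderOf ψ := by rw [orderOf_stdAddChar]; norm_num
  have hM₀ : 0 ≤ M := (NNReal.coe_nonneg _).trans (hM 0 (by simp))
  have hMψ (x : ι → ZMod 5) : ∑ v, ‖∑ i, a v i * ψ (x i)‖ ^ p ≤ M ^ p := by
    have h := rpow_le_rpow (NNReal.coe_nonneg _) (hM (fun i => ψ (x i))
      ((pi_norm_le_iff_of_nonneg zero_le_one).2 fun i => (ψ.norm_apply (x i)).le)) hp₀.le
    rwa [coe_ellNorm_rpow hp₀.ne'] at h
  rw [← rpow_le_rpow_iff (NNReal.coe_nonneg _) (by positivity) hp₀]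
  calc ((ellNorm p fun v => ellNorm 2 fun i => ‖a v i‖₊ : ℝ≥0) : ℝ) ^ p
      = ∑ v, (∑ i, ‖a v i‖ ^ 2) ^ (p / 2) := by
        rw [coe_ellNorm_rpow hp₀.ne']
        refine Finset.sum_congr rfl fun v _ => ?_
        simp only [ellNorm, NNReal.coe_rpow, NNReal.coe_sum, coe_nnnorm, rpow_two]
        rw [← rpow_mul (by positivity), one_div_mul_eq_div]
    _ ≤ ∑ v, exp (15 / 56 * (2 - p)) * 𝔼 x : ι → ZMod 5, ‖∑ i, a v i * ψ (x i)‖ ^ p :=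
        Finset.sum_le_sum fun v _ => sum_norm_sq_rpow_le_exp_mul_expect hψ hp₀ hp (a v)
    _ = exp (15 / 56 * (2 - p)) * 𝔼 x : ι → ZMod 5, ∑ v, ‖∑ i, a v i * ψ (x i)‖ ^ p := by
        rw [← Finset.mul_sum, Finset.expect_sum_comm]
    _ ≤ exp (15 / 56 * (2 - p)) * M ^ p := by
        gcongr
        exact Finset.expect_le Finset.univ_nonempty fun x _ => hMψ x
    _ = (exp (15 / 56 * (2 / p - 1)) * M) ^ p := by
        rw [mul_rpow (exp_nonneg _) hM₀, ← exp_mul, mul_assoc (15 / 56), sub_mul,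
          div_mul_cancel₀ _ hp₀.ne', one_mul]

variable [DecidableEq ι]

lemma apply_eq_sum_smul_single {R M : Type*} [Semiring R] [AddCommMonoid M] [Module R M]
    (f : (ι → R) →ₗ[R] M) (x : ι → R) : f x = ∑ i, x i • f (Pi.single i 1) := by
  conv_lhs => rw [← Finset.univ_sum_single x, map_sum]
  simp only [← map_smul, ← Pi.single_smul, smul_eq_mul, mul_one]

lemma sum_norm_apply_single_le (f : (ι → ℂ) →L[ℂ] ℂ) : ∑ i, ‖f (Pi.single i 1)‖ ≤ ‖f‖ := by
  choose u hu huf using fun i => Complex.exists_norm_eq_mul_self (f (Pi.single i 1))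
  have hfu : f u = ↑(∑ i, ‖f (Pi.single i 1)‖) := by
    push_cast
    simp only [huf]
    exact apply_eq_sum_smul_single (f : (ι → ℂ) →ₗ[ℂ] ℂ) u
  calc ∑ i, ‖f (Pi.single i 1)‖
      = ‖f u‖ := by rw [hfu, Complex.norm_real, norm_of_nonneg (by positivity)]
    _ ≤ ‖f‖ := f.unit_le_opNorm u ((pi_norm_le_iff_of_nonneg zero_le_one).2 fun i => (hu i).le)

/-- The exponent `2n / (n + 1)` of the Bohnenblust–Hille inequality for `n`-linear forms. -/
noncomputable def bhExponent (n : ℕ) : ℝ := 2 * n / (n + 1)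

/-- The absolute values `|U(e_{i₁}, …, e_{iₙ})|` of the coefficients of an `n`-linear form,
indexed by `(i₁, …, iₙ)`. -/
noncomputable def coeffNNNorm {n : ℕ} (U : ContinuousMultilinearMap ℂ (fun _ : Fin n => ι → ℂ) ℂ)
    (i : Fin n → ι) : ℝ≥0 :=
  ‖U fun k => Pi.single (i k) 1‖₊

lemma curryMid_apply_single {n : ℕ}
    (U : ContinuousMultilinearMap ℂ (fun _ : Fin (n + 1) => ι → ℂ) ℂ)
    (k : Fin (n + 1)) (x : ι → ℂ) (v : Fin n → ι) :
    U.curryMid k x (fun j => Pi.single (v j) 1) =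
      ∑ i, U (fun j => Pi.single (k.insertNth (α := fun _ => ι) i v j) 1) * x i := by
  have hU (i : ι) : (fun j => Pi.single (k.insertNth (α := fun _ => ι) i v j) 1) =
      k.insertNth (α := fun _ => ι → ℂ) (Pi.single i 1) fun j => Pi.single (v j) 1 :=
    Fin.eq_insertNth_iff.2 ⟨by simp, by ext; simp [Fin.removeNth]⟩
  have hx : U.curryMid k x = ∑ i, x i • U.curryMid k (Pi.single i 1) :=
    apply_eq_sum_smul_single (U.curryMid k).toLinearMap x
  simp only [hx, sum_apply, smul_apply, ContinuousMultilinearMap.curryMid_apply, hU,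
    smul_eq_mul, mul_comm]

lemma ellNorm_ellNorm_two_coeffNNNorm_le {n : ℕ} (hp₀ : 0 < p) (hp : p ≤ 2)
    (U : ContinuousMultilinearMap ℂ (fun _ : Fin (n + 1) => ι → ℂ) ℂ) {M : ℝ}
    (hM : ∀ V : ContinuousMultilinearMap ℂ (fun _ : Fin n => ι → ℂ) ℂ, ‖V‖ ≤ ‖U‖ →
      ellNorm p (coeffNNNorm V) ≤ M) (k : Fin (n + 1)) :
    (ellNorm p fun v => ellNorm 2 fun i => coeffNNNorm U (k.insertNth i v)) ≤
      exp (15 / 56 * (2 / p - 1)) * M := by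
  refine ellNorm_ellNorm_two_le hp₀ hp
    (a := fun v i => U fun j => Pi.single (k.insertNth (α := fun _ => ι) i v j) 1) fun x hx => ?_
  simp only [← curryMid_apply_single]
  exact hM _ (((U.curryMid k).unit_le_opNorm x hx).trans_eq (U.norm_curryMid k))

lemma ellNorm_one_coeffNNNorm_le (U : ContinuousMultilinearMap ℂ (fun _ : Fin 1 => ι → ℂ) ℂ) :
    ellNorm 1 (coeffNNNorm U) ≤ ‖U‖ := by
  obtain ⟨f, rfl⟩ := (ContinuousMultilinearMap.ofSubsingleton ℂ (ι → ℂ) ℂ (0 : Fin 1)).surjective U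
  rw [ContinuousMultilinearMap.norm_ofSubsingleton]
  convert sum_norm_apply_single_le f
  simp only [ellNorm, coeffNNNorm]
  rw [← (Equiv.funUnique (Fin 1) ι).symm.sum_comp]
  simp

lemma bhExponent_one : bhExponent 1 = 1 := by
  norm_num [bhExponent]

lemma bhExponent_pos (n : ℕ) : 0 < bhExponent (n + 1) := by
  rw [bhExponent]
  positivity

lemma bhExponent_le_two (n : ℕ) : bhExponent n ≤ 2 := by
  rw [bhExponent, div_le_iff₀ (by positivity)]
  linarith

lemma one_div_bhExponent (n : ℕ) : 1 / bhExponent (n + 1) = (n + 2) / (2 * (n + 1)) := by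
  rw [bhExponent, one_div_div]
  push_cast
  ring

theorem ellNorm_bhExponent_coeffNNNorm_le (n : ℕ)
    (U : ContinuousMultilinearMap ℂ (fun _ : Fin (n + 1) => ι → ℂ) ℂ) :
    ellNorm (bhExponent (n + 1)) (coeffNNNorm U) ≤ exp (15 / 56 * harmonic n) * ‖U‖ := by
  induction n with
  | zero => simpa [bhExponent_one] using ellNorm_one_coeffNNNorm_le U
  | succ n ih =>
    have hp₀ := bhExponent_pos n
    have hstep := ellNorm_ellNorm_two_coeffNNNorm_le hp₀ (bhExponent_le_two _) U fun V hV =>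
      (ih V).trans (mul_le_mul_of_nonneg_left hV (exp_nonneg _))
    have hexp : exp (15 / 56 * (2 / bhExponent (n + 1) - 1)) *
        (exp (15 / 56 * harmonic n) * ‖U‖) = exp (15 / 56 * harmonic (n + 1)) * ‖U‖ := by
      rw [← mul_assoc, ← exp_add, ← mul_add, div_eq_mul_one_div 2, one_div_bhExponent,
        harmonic_succ]
      push_cast
      congr 3
      field_simp
      ring
    lift exp (15 / 56 * harmonic (n + 1)) * ‖U‖ to ℝ≥0 using by positivity with M
    rw [hexp] at hstep
    refine ellNorm_le_of_forall_ellNorm_insertNth_le hp₀ (bhExponent_le_two _)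
      (bhExponent_pos _) ?_ hstep
    rw [one_div_bhExponent, div_eq_mul_one_div _ (bhExponent _), one_div_bhExponent]
    push_cast
    field_simp
    ring

end BohnenblustHille

section HarmonicBound

lemma harmonic_le_log_add_two_thirds {m : ℕ} (hm : 6 ≤ m) : (harmonic m : ℝ) ≤ log m + 2 / 3 := by
  have h := (strictAnti_eulerMascheroniSeq'.antitone hm).trans_lt
    eulerMascheroniSeq'_six_lt_two_thirds
  rw [eulerMascheroniSeq', if_neg (by lia)] at h
  linarith

lemma exp_mul_harmonic_le {m : ℕ} (hm : 2 ^ 8 ≤ m) :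
    exp (15 / 56 * harmonic m) ≤ 0.99136434217 * (m : ℝ) ^ (0.304975 : ℝ) := by
  have hm₀ : (0 : ℝ) < m := by exact_mod_cast (by norm_num : 0 < 2 ^ 8).trans_le hm
  have hlog : 8 * log 2 ≤ log m := by
    rw [← log_rpow two_pos]
    exact log_le_log (by positivity) (by exact_mod_cast hm)
  have hC : (0 : ℝ) < 0.99136434217 := by norm_num
  have hlogC : -0.0088 ≤ log 0.99136434217 :=
    (one_sub_inv_le_log_of_pos hC).trans' (by norm_num)
  rw [← exp_log hC, rpow_def_of_pos hm₀, ← exp_add, exp_le_exp]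
  linarith [harmonic_le_log_add_two_thirds (by lia : 6 ≤ m), log_two_gt_d9]

end HarmonicBound

lemma BHcomplex_eq_ellNorm (n N : ℕ)
    (U : ContinuousMultilinearMap ℂ (fun _ : Fin n => (Fin N → ℂ)) ℂ) :
    BHcomplex n N U = ellNorm (bhExponent n) (coeffNNNorm U) := by
  simp only [BHcomplex, ellNorm, bhExponent, coeffNNNorm, one_div_div, NNReal.coe_rpow,
    NNReal.coe_sum, coe_nnnorm]

theorem stmt14_general (n : ℕ) (hn : 2 ^ 8 < n) (N : ℕ)
    (U : ContinuousMultilinearMap ℂ (fun _ : Fin n => (Fin N → ℂ)) ℂ) :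
    BHcomplex n N U ≤ 0.99136434217 * ((n : ℝ) - 1) ^ (0.304975 : ℝ) * ‖U‖ := by
  obtain ⟨m, rfl⟩ : ∃ m, n = m + 1 := Nat.exists_eq_succ_of_ne_zero (by lia)
  rw [BHcomplex_eq_ellNorm, Nat.cast_add_one, add_sub_cancel_right]
  calc (ellNorm (bhExponent (m + 1)) (coeffNNNorm U) : ℝ)
      ≤ exp (15 / 56 * harmonic m) * ‖U‖ := ellNorm_bhExponent_coeffNNNorm_le m U
    _ ≤ 0.99136434217 * (m : ℝ) ^ (0.304975 : ℝ) * ‖U‖ := by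
        gcongr
        exact exp_mul_harmonic_le (Nat.le_of_lt_succ hn)

theorem stmt14 (n : ℕ) (hn : 2 ^ 15 < n) (N : ℕ) (hN : 0 < N)
    (U : ContinuousMultilinearMap ℂ (fun _ : Fin n => (Fin N → ℂ)) ℂ) :
    BHcomplex n N U ≤ 0.99136434217 * ((n : ℝ) - 1) ^ (0.304975 : ℝ) * ‖U‖ :=
  stmt14_general n ((by norm_num : 2 ^ 8 < 2 ^ 15).trans hn) N U
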